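/- arXiv:2008.04997 — 2 statements merged into one kernel-verified Lean document; each statement's English description precedes it below -/
import Mathlib

section
/- For every finite group G there exists a finite partially ordered set P with exactly 4·|G| elements, together with an action of G on P by order isomorphisms, such that the induced homomorphism G → Aut(P) is an isomorphism and the action of G on P is free (equivalently, the action has exactly 4 orbits, each of cardinality |G|). -/
namespace FreePoset

/-- An irredundant generating sequence `h 0 = 1, h 1, ..., h n`. -/
theorem exists_seq (G : Type*) [Group G] [Fintype G] :
    ∃ (n : ℕ) (h : ℕ → G), h 0 = 1 ∧
      (∀ j < n, h (j + 1) ∉ Subgroup.closure (h '' Set.Iic j)) ∧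
      Subgroup.closure (h '' Set.Iic n) = ⊤ := by
  have key : ∀ k : ℕ, ∃ (n : ℕ) (h : ℕ → G), h 0 = 1 ∧
      (∀ j < n, h (j + 1) ∉ Subgroup.closure (h '' Set.Iic j)) ∧
      (Subgroup.closure (h '' Set.Iic n) = ⊤ ∨ n = k) := by
    intro k
    induction k with
    | zero => exact ⟨0, fun _ => 1, rfl, by simp, Or.inr rfl⟩
    | succ k ih =>
      obtain ⟨n, h, h0, hi, hc⟩ := ih
      by_cases ht : Subgroup.closure (h '' Set.Iic n) = ⊤
      · exact ⟨n, h, h0, hi, Or.inl ht⟩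
      · have hn : n = k := hc.resolve_left ht
        subst hn
        obtain ⟨x, hx⟩ : ∃ x, x ∉ Subgroup.closure (h '' Set.Iic n) := by
          by_contra hcon
          push Not at hcon
          exact ht ((Subgroup.eq_top_iff' _).2 hcon)
        have himg : ∀ j ≤ n, (Function.update h (n + 1) x) '' Set.Iic j = h '' Set.Iic j := by
          intro j hj
          apply Set.image_congr
          intro a ha
          have : a ≤ j := ha
          exact Function.update_of_ne (by omega) _ _
        refine ⟨n + 1, Function.update h (n + 1) x, ?_, ?_, Or.inr rfl⟩
        · rw [Function.update_of_ne (by omega)]; exact h0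
        · intro j hj
          rw [himg j (by omega)]
          rcases Nat.lt_succ_iff_lt_or_eq.1 hj with h1 | h1
          · rw [Function.update_of_ne (by omega)]; exact hi j h1
          · subst h1; simpa using hx
  obtain ⟨n, h, h0, hi, hc⟩ := key (Fintype.card G)
  refine ⟨n, h, h0, hi, hc.resolve_right ?_⟩
  intro hn
  have hlt : ∀ a b, a < b → b ≤ n → h a ≠ h b := by
    intro a b hab hb he
    obtain ⟨c, rfl⟩ : ∃ c, b = c + 1 := ⟨b - 1, by omega⟩
    apply hi c (by omega)
    rw [← he]
    exact Subgroup.subset_closure ⟨a, by simp; omega, rfl⟩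
  have hinj : Function.Injective (fun i : Fin (n + 1) => h i) := by
    intro a b hab
    by_contra hne
    rcases lt_or_gt_of_ne hne with h1 | h1
    · exact hlt a b h1 (by omega) hab
    · exact hlt b a h1 (by omega) hab.symm
  have := Fintype.card_le_of_injective _ hinj
  simp at this
  omega

/-- A pair of subsets `S`, `T` containing `1` whose Cayley digraphs are jointly rigid. -/
theorem exists_sets (G : Type*) [Group G] [Fintype G] :
    ∃ S T : Set G, 1 ∈ S ∧ 1 ∈ T ∧
      ∀ f : G → G, Function.Injective f →
        (∀ a b, a⁻¹ * b ∈ S → (f a)⁻¹ * f b ∈ S) →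
        (∀ a b, a⁻¹ * b ∈ T → (f a)⁻¹ * f b ∈ T) → f 1 = 1 → ∀ x, f x = x := by
  obtain ⟨n, h, h0, hi, hc⟩ := exists_seq G
  have hmem : ∀ a b, a ≤ b → h a ∈ Subgroup.closure (h '' Set.Iic b) := fun a b hab =>
    Subgroup.subset_closure ⟨a, hab, rfl⟩
  have hlt : ∀ a b, a < b → b ≤ n → h a ≠ h b := by
    intro a b hab hb he
    obtain ⟨c, rfl⟩ : ∃ c, b = c + 1 := ⟨b - 1, by omega⟩
    apply hi c (by omega)
    rw [← he]
    exact hmem _ _ (by omega)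
  refine ⟨h '' Set.Iic n, insert 1 {x | ∃ i < n, x = (h i)⁻¹ * h (i + 1)},
    ⟨0, by simp, h0⟩, Set.mem_insert _ _, ?_⟩
  intro f finj fS fT f1
  have hT : ∀ i j, i < j → j ≤ n →
      (h i)⁻¹ * h j ∈ insert 1 {x | ∃ i < n, x = (h i)⁻¹ * h (i + 1)} → j = i + 1 := by
    intro i j hij hj hm
    rcases hm with hm | ⟨k, hk, hm⟩
    · exact absurd (inv_mul_eq_one.1 hm) (hlt i j hij hj)
    · rcases lt_trichotomy j (k + 1) with h1 | h1 | h1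
      · exfalso
        apply hi k hk
        have : h (k + 1) = h k * ((h i)⁻¹ * h j) := by rw [hm]; group
        rw [this]
        exact mul_mem (hmem _ _ le_rfl)
          (mul_mem (inv_mem (hmem _ _ (by omega))) (hmem _ _ (by omega)))
      · subst h1
        have he : h i = h k := by simpa using hm
        rcases lt_trichotomy i k with h2 | h2 | h2
        · exact absurd he (hlt _ _ h2 (by omega))
        · rw [h2]
        · omega
      · exfalso
        obtain ⟨c, rfl⟩ : ∃ c, j = c + 1 := ⟨j - 1, by omega⟩
        apply hi c (by omega)
        have : h (c + 1) = h i * ((h k)⁻¹ * h (k + 1)) := by rw [← hm]; group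
        rw [this]
        exact mul_mem (hmem _ _ (by omega))
          (mul_mem (inv_mem (hmem _ _ (by omega))) (hmem _ _ (by omega)))
  have hfix : ∀ g, f g = g → ∀ i ≤ n, f (g * h i) = g * h i := by
    intro g hg i
    induction i using Nat.strong_induction_on with
    | _ i ih =>
      intro hin
      rcases Nat.eq_zero_or_pos i with rfl | hpos
      · simpa [h0] using hg
      obtain ⟨i, rfl⟩ : ∃ c, i = c + 1 := ⟨i - 1, by omega⟩
      have hs := fS g (g * h (i + 1)) ⟨i + 1, hin, by group⟩
      obtain ⟨j, hj, hje⟩ := hs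
      have hj' : j ≤ n := hj
      rw [hg] at hje
      have hje' : f (g * h (i + 1)) = g * h j := by rw [hje]; group
      have hji : i < j := by
        by_contra hcon
        have h2 := ih j (by omega) (by omega)
        have h3 := finj (hje'.trans h2.symm)
        exact hlt j (i + 1) (by omega) hin (mul_left_cancel h3).symm
      have ht := fT (g * h i) (g * h (i + 1)) (Or.inr ⟨i, by omega, by group⟩)
      rw [ih i (by omega) (by omega), hje'] at ht
      have h4 : (g * h i)⁻¹ * (g * h j) = (h i)⁻¹ * h j := by group
      rw [h4] at ht
      rw [hje', hT i j hji hj' ht]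
  have hall : ∀ s ∈ Subgroup.closure (h '' Set.Iic n), ∀ g, f g = g → f (g * s) = g * s := by
    intro s hs
    induction hs using Subgroup.closure_induction with
    | mem x hx =>
      obtain ⟨i, hi', rfl⟩ := hx
      exact fun g hg => hfix g hg i hi'
    | one => intro g hg; simpa using hg
    | mul x y _ _ hx hy =>
      intro g hg
      rw [← mul_assoc]
      exact hy _ (hx g hg)
    | inv x _ hx =>
      have hp : ∀ m : ℕ, ∀ g, f g = g → f (g * x ^ m) = g * x ^ m := by
        intro m
        induction m with
        | zero => intro g hg; simpa using hg
        | succ m ihm =>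
          intro g hg
          rw [pow_succ, ← mul_assoc]
          exact hx _ (ihm g hg)
      have hinv : x⁻¹ = x ^ (Fintype.card G - 1) := by
        symm
        apply eq_inv_of_mul_eq_one_left
        rw [← pow_succ, Nat.sub_add_cancel Fintype.card_pos, pow_card_eq_one]
      rw [hinv]
      exact hp _
  intro x
  have := hall x (by rw [hc]; trivial) 1 f1
  simpa using this

/-- The underlying set of the poset: four copies of `G`. -/
@[ext] structure Pt (G : Type) (S T : Set G) where
  g : G
  l : Fin 4

variable {G : Type} [Group G] {S T : Set G}

/-- The order relation. -/
def Rel (x y : Pt G S T) : Prop :=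
  (x.g = y.g ∧ x.l ≤ y.l) ∨ (x.l = 0 ∧ y.l = 2 ∧ x.g⁻¹ * y.g ∈ S) ∨
    (x.l = 1 ∧ y.l = 3 ∧ x.g⁻¹ * y.g ∈ T) ∨ (x.l = 0 ∧ y.l = 3)

theorem Rel.l_le {x y : Pt G S T} (h : Rel x y) : x.l ≤ y.l := by
  rcases h with h | h | h | h
  · exact h.2
  · rw [h.1, h.2.1]; decide
  · rw [h.1, h.2.1]; decide
  · rw [h.1, h.2]; decide

theorem Rel.eq_of_l {x y : Pt G S T} (h : Rel x y) (hl : x.l = y.l) : x = y := by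
  rcases h with h | h | h | h
  · exact Pt.ext h.1 hl
  · rw [h.1, h.2.1] at hl; exact absurd hl (by decide)
  · rw [h.1, h.2.1] at hl; exact absurd hl (by decide)
  · rw [h.1, h.2] at hl; exact absurd hl (by decide)

instance : PartialOrder (Pt G S T) where
  le := Rel
  le_refl x := Or.inl ⟨rfl, le_rfl⟩
  le_antisymm x y h1 h2 := h1.eq_of_l (le_antisymm h1.l_le h2.l_le)
  le_trans x y z h1 h2 := by
    by_cases e1 : x.l = y.l
    · rw [h1.eq_of_l e1]; exact h2
    by_cases e2 : y.l = z.l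
    · rw [← h2.eq_of_l e2]; exact h1
    obtain ⟨a, i⟩ := x
    obtain ⟨b, j⟩ := y
    obtain ⟨c, k⟩ := z
    simp only [Rel] at *
    fin_cases i <;> fin_cases j <;> fin_cases k <;> simp_all

theorem le_def (x y : Pt G S T) : x ≤ y ↔ Rel x y := Iff.rfl

theorem l_lt {x y : Pt G S T} (h : x < y) : x.l < y.l :=
  lt_of_le_of_ne (Rel.l_le h.le) fun e => h.ne (Rel.eq_of_l h.le e)

theorem chain_lt (g : G) {i j : Fin 4} (h : i < j) : (⟨g, i⟩ : Pt G S T) < ⟨g, j⟩ :=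
  lt_of_le_of_ne (Or.inl ⟨rfl, h.le⟩) fun e => h.ne (congrArg Pt.l e)

theorem iso_l (φ : Pt G S T ≃o Pt G S T) (g : G) (i : Fin 4) : (φ ⟨g, i⟩).l = i := by
  have h1 := l_lt (φ.strictMono (chain_lt (S := S) (T := T) g (show (0 : Fin 4) < 1 by decide)))
  have h2 := l_lt (φ.strictMono (chain_lt (S := S) (T := T) g (show (1 : Fin 4) < 2 by decide)))
  have h3 := l_lt (φ.strictMono (chain_lt (S := S) (T := T) g (show (2 : Fin 4) < 3 by decide)))
  fin_cases i <;> simp only [Fin.zero_eta, Fin.mk_one, Fin.reduceFinMk] <;> omega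

theorem iso_g_aux (φ : Pt G S T ≃o Pt G S T) (g : G) (i j : Fin 4) (hij : j.val = i.val + 1) :
    (φ ⟨g, i⟩).g = (φ ⟨g, j⟩).g := by
  have h1 := (φ.strictMono (chain_lt (S := S) (T := T) g (show i < j by omega))).le
  have e1 := iso_l φ g i
  have e2 := iso_l φ g j
  rcases h1 with h | h | h | h
  · exact h.1
  · have a := e1.symm.trans h.1
    have b := e2.symm.trans h.2.1
    subst a b; simp at hij
  · have a := e1.symm.trans h.1
    have b := e2.symm.trans h.2.1
    subst a b; simp at hij
  · have a := e1.symm.trans h.1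
    have b := e2.symm.trans h.2
    subst a b; simp at hij

theorem iso_eq (φ : Pt G S T ≃o Pt G S T) (g : G) (i : Fin 4) :
    φ ⟨g, i⟩ = ⟨(φ ⟨g, 0⟩).g, i⟩ := by
  have h1 := iso_g_aux φ g 0 1 rfl
  have h2 := iso_g_aux φ g 1 2 rfl
  have h3 := iso_g_aux φ g 2 3 rfl
  refine Pt.ext ?_ (iso_l φ g i)
  fin_cases i
  · rfl
  · exact h1.symm
  · exact (h1.trans h2).symm
  · exact ((h1.trans h2).trans h3).symm

theorem le_S (hS : 1 ∈ S) (a b : G) :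
    (⟨a, 0⟩ : Pt G S T) ≤ ⟨b, 2⟩ ↔ a⁻¹ * b ∈ S := by
  rw [le_def, Rel]
  constructor
  · rintro (h | h | h | h)
    · have : a = b := h.1
      simpa [this] using hS
    · exact h.2.2
    · simp at h
    · simp at h
  · intro h
    exact Or.inr (Or.inl ⟨rfl, rfl, h⟩)

theorem le_T (hT : 1 ∈ T) (a b : G) :
    (⟨a, 1⟩ : Pt G S T) ≤ ⟨b, 3⟩ ↔ a⁻¹ * b ∈ T := by
  rw [le_def, Rel]
  constructor
  · rintro (h | h | h | h)
    · have : a = b := h.1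
      simpa [this] using hT
    · simp at h
    · exact h.2.2
    · simp at h
  · intro h
    exact Or.inr (Or.inr (Or.inl ⟨rfl, rfl, h⟩))

/-- The action of `G` by left translation. -/
def act (S T : Set G) : G →* (Pt G S T ≃o Pt G S T) where
  toFun a :=
    { toFun := fun x => ⟨a * x.g, x.l⟩
      invFun := fun x => ⟨a⁻¹ * x.g, x.l⟩
      left_inv := fun x => by simp
      right_inv := fun x => by simp
      map_rel_iff' := by
        intro x y
        simp [le_def, Rel, mul_assoc] }
  map_one' := by ext x <;> simp
  map_mul' a b := by
    ext x
    · exact mul_assoc a b x.g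
    · rfl

theorem act_apply (a : G) (x : Pt G S T) : act S T a x = ⟨a * x.g, x.l⟩ := rfl

/-- Points of the poset as pairs. -/
def ptEquiv (S T : Set G) : G × Fin 4 ≃ Pt G S T where
  toFun p := ⟨p.1, p.2⟩
  invFun x := (x.g, x.l)
  left_inv _ := rfl
  right_inv _ := rfl

theorem main (G : Type) [Group G] [Fintype G] :
    ∃ (P : Type) (_ : PartialOrder P) (_ : Fintype P) (φ : G →* (P ≃o P)),
      Fintype.card P = 4 * Fintype.card G ∧
      Function.Bijective φ ∧
      (∀ (g : G) (x : P), φ g x = x → g = 1) := by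
  obtain ⟨S, T, hS, hT, hrigid⟩ := exists_sets G
  have hfree : ∀ (g : G) (x : Pt G S T), act S T g x = x → g = 1 := by
    intro g x h
    have := congrArg Pt.g h
    simpa [act_apply] using this
  refine ⟨Pt G S T, inferInstance, Fintype.ofEquiv _ (ptEquiv S T), act S T, ?_, ⟨?_, ?_⟩, hfree⟩
  · rw [Fintype.ofEquiv_card]; simp [mul_comm]
  · rw [injective_iff_map_eq_one]
    intro a ha
    exact hfree a ⟨1, 0⟩ (by rw [ha]; rfl)
  · intro φ
    set c := (φ ⟨1, 0⟩).g with hc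
    have hfix := hrigid (fun x => c⁻¹ * (φ ⟨x, 0⟩).g) ?_ ?_ ?_ (by simp [hc])
    · refine ⟨c, ?_⟩
      apply OrderIso.ext
      funext x
      obtain ⟨x, i⟩ := x
      have := hfix x
      simp only [inv_mul_eq_iff_eq_mul] at this
      rw [iso_eq φ x i, this]
      rfl
    · intro a b hab
      have h1 : (φ ⟨a, 0⟩).g = (φ ⟨b, 0⟩).g := mul_left_cancel hab
      have h2 : φ ⟨a, 0⟩ = φ ⟨b, 0⟩ := by rw [iso_eq φ a 0, iso_eq φ b 0, h1]
      exact congrArg Pt.g (φ.injective h2)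
    · intro a b hab
      have h1 := φ.monotone ((le_S (T := T) hS a b).2 hab)
      rw [iso_eq φ a 0, iso_eq φ b 2, le_S hS] at h1
      simpa [mul_assoc] using h1
    · intro a b hab
      have h1 := φ.monotone ((le_T (S := S) hT a b).2 hab)
      rw [iso_eq φ a 1, iso_eq φ b 3, le_T hT] at h1
      simpa [mul_assoc] using h1

end FreePoset

/-- For every finite group `G` there exists a finite partially ordered set `P` with
exactly `4 * |G|` elements, together with an action of `G` on `P` by order isomorphisms
(i.e. a group homomorphism `φ : G →* (P ≃o P)`), such that `φ` is an isomorphism onto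
the full automorphism group and the action is free. -/
theorem exists_poset_card_four_mul_free_action (G : Type*) [Group G] [Fintype G] :
    ∃ (P : Type) (_ : PartialOrder P) (_ : Fintype P) (φ : G →* (P ≃o P)),
      Fintype.card P = 4 * Fintype.card G ∧
      Function.Bijective φ ∧
      (∀ (g : G) (x : P), φ g x = x → g = 1) := by
  let m : Shrink.{0} G ≃* G := Shrink.mulEquiv
  let _ : Fintype (Shrink.{0} G) := Fintype.ofEquiv G m.symm.toEquiv
  obtain ⟨P, i1, i2, φ, hcard, hbij, hfree⟩ := FreePoset.main (Shrink.{0} G)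
  refine ⟨P, i1, i2, φ.comp m.symm.toMonoidHom, ?_, ?_, ?_⟩
  · rw [hcard, Fintype.card_congr m.toEquiv]
  · exact hbij.comp m.symm.bijective
  · intro g x h
    have := hfree (m.symm g) x h
    simpa using this
end

section
/- For every finite abelian group G there exists a finite partially ordered set P with exactly 3·|G| elements whose automorphism group Aut(P) is isomorphic to G. -/
namespace PosetAut

/-- The auxiliary poset for a cyclic group: three layers indexed by `ZMod n`. -/
def Cyc (n : ℕ) : Type := Fin 3 × ZMod n

def Cyc.rel {n : ℕ} (x y : Fin 3 × ZMod n) : Prop :=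
  (x.1 ≤ y.1 ∧ x.2 = y.2) ∨ (x.1 = 0 ∧ y.1 = 2 ∧ x.2 = y.2 + 1)

instance (n : ℕ) : PartialOrder (Cyc n) where
  le x y := Cyc.rel x y
  le_refl x := Or.inl ⟨le_refl _, rfl⟩
  le_trans := by
    rintro ⟨x, i⟩ ⟨y, j⟩ ⟨z, k⟩ h1 h2
    simp only [Cyc.rel] at h1 h2 ⊢
    rcases h1 with ⟨h1, rfl⟩ | ⟨rfl, rfl, rfl⟩
    · rcases h2 with ⟨h2, rfl⟩ | ⟨rfl, rfl, rfl⟩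
      · exact Or.inl ⟨h1.trans h2, rfl⟩
      · right; refine ⟨by omega, rfl, rfl⟩
    · rcases h2 with ⟨h2, rfl⟩ | ⟨h, rfl, rfl⟩
      · right; refine ⟨rfl, by omega, rfl⟩
      · omega
  le_antisymm := by
    rintro ⟨x, i⟩ ⟨y, j⟩ h1 h2
    simp only [Cyc.rel] at h1 h2
    rcases h1 with ⟨h1, rfl⟩ | ⟨rfl, rfl, rfl⟩
    · rcases h2 with ⟨h2, -⟩ | ⟨rfl, rfl, h⟩
      · exact Prod.ext (le_antisymm h1 h2) rfl
      · omega
    · rcases h2 with ⟨h2, -⟩ | ⟨h, -⟩ <;> omega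

def Cyc.mk {n : ℕ} (k : Fin 3) (i : ZMod n) : Cyc n := (k, i)

theorem Cyc.exists_mk {n : ℕ} (x : Cyc n) : ∃ k i, x = Cyc.mk k i := ⟨x.1, x.2, rfl⟩

theorem Cyc.mk_inj {n : ℕ} {k l : Fin 3} {i j : ZMod n} :
    Cyc.mk k i = Cyc.mk l j ↔ k = l ∧ i = j := Prod.mk_inj

theorem Cyc.mk_le {n : ℕ} {k l : Fin 3} {i j : ZMod n} :
    Cyc.mk k i ≤ Cyc.mk l j ↔ (k ≤ l ∧ i = j) ∨ (k = 0 ∧ l = 2 ∧ i = j + 1) := Iff.rfl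

theorem Cyc.isMin_iff {n : ℕ} {k : Fin 3} {i : ZMod n} : IsMin (Cyc.mk k i) ↔ k = 0 := by
  constructor
  · intro h
    have := h (b := Cyc.mk 0 i) (Cyc.mk_le.2 (Or.inl ⟨Fin.zero_le _, rfl⟩))
    rw [Cyc.mk_le] at this
    omega
  · rintro rfl b hb
    obtain ⟨l, j, rfl⟩ := b.exists_mk
    rw [Cyc.mk_le] at hb ⊢
    rcases hb with ⟨h, rfl⟩ | ⟨_, h, _⟩
    · left; exact ⟨Fin.zero_le _, rfl⟩
    · omega

theorem Cyc.isMax_iff {n : ℕ} {k : Fin 3} {i : ZMod n} : IsMax (Cyc.mk k i) ↔ k = 2 := by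
  constructor
  · intro h
    have := h (b := Cyc.mk 2 i) (Cyc.mk_le.2 (Or.inl ⟨by omega, rfl⟩))
    rw [Cyc.mk_le] at this
    omega
  · rintro rfl b hb
    obtain ⟨l, j, rfl⟩ := b.exists_mk
    rw [Cyc.mk_le] at hb ⊢
    rcases hb with ⟨h, rfl⟩ | ⟨h, _⟩
    · left; exact ⟨by omega, rfl⟩
    · omega

def Cyc.shift {n : ℕ} (a : ZMod n) : Cyc n ≃o Cyc n where
  toFun x := Cyc.mk x.1 (a + x.2)
  invFun x := Cyc.mk x.1 (-a + x.2)
  left_inv x := by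
    obtain ⟨k, i, rfl⟩ := x.exists_mk
    simp [Cyc.mk]
    rfl
  right_inv x := by
    obtain ⟨k, i, rfl⟩ := x.exists_mk
    simp [Cyc.mk]
    rfl
  map_rel_iff' := by
    intro x y
    obtain ⟨k, i, rfl⟩ := x.exists_mk
    obtain ⟨l, j, rfl⟩ := y.exists_mk
    change Cyc.mk k (a + i) ≤ Cyc.mk l (a + j) ↔ _
    simp [Cyc.mk_le, add_assoc]

theorem Cyc.shift_mk {n : ℕ} (a : ZMod n) (k : Fin 3) (i : ZMod n) :
    Cyc.shift a (Cyc.mk k i) = Cyc.mk k (a + i) := rfl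

theorem Cyc.level {n : ℕ} (f : Cyc n ≃o Cyc n) (k : Fin 3) (i : ZMod n) :
    ∃ j, f (Cyc.mk k i) = Cyc.mk k j := by
  obtain ⟨l, j, h⟩ := (f (Cyc.mk k i)).exists_mk
  have h1 : IsMin (f (Cyc.mk k i)) ↔ IsMin (Cyc.mk k i) := f.isMin_apply
  have h2 : IsMax (f (Cyc.mk k i)) ↔ IsMax (Cyc.mk k i) := f.isMax_apply
  rw [h, Cyc.isMin_iff, Cyc.isMin_iff] at h1
  rw [h, Cyc.isMax_iff, Cyc.isMax_iff] at h2
  have : l = k := by omega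
  exact ⟨j, by rw [h, this]⟩

theorem Cyc.eq_shift {n : ℕ} (hn : 1 < n) (f : Cyc n ≃o Cyc n) :
    ∃ a, f = Cyc.shift a := by
  have : Fact (1 < n) := ⟨hn⟩
  choose t ht using Cyc.level f
  have h01 : ∀ i, t 1 i = t 0 i := fun i => by
    have : f (Cyc.mk 0 i) ≤ f (Cyc.mk 1 i) :=
      f.monotone (Cyc.mk_le.2 (Or.inl ⟨by omega, rfl⟩))
    rw [ht, ht, Cyc.mk_le] at this
    rcases this with ⟨_, h⟩ | ⟨_, h, _⟩
    · exact h.symm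
    · omega
  have h12 : ∀ i, t 2 i = t 0 i := fun i => by
    have : f (Cyc.mk 1 i) ≤ f (Cyc.mk 2 i) :=
      f.monotone (Cyc.mk_le.2 (Or.inl ⟨by omega, rfl⟩))
    rw [ht, ht, Cyc.mk_le] at this
    rcases this with ⟨_, h⟩ | ⟨h, _⟩
    · rw [← h, h01]
    · omega
  have hs : ∀ i, t 0 (i + 1) = t 0 i + 1 := fun i => by
    have : f (Cyc.mk 0 (i + 1)) ≤ f (Cyc.mk 2 i) :=
      f.monotone (Cyc.mk_le.2 (Or.inr ⟨rfl, rfl, rfl⟩))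
    rw [ht, ht, Cyc.mk_le, h12] at this
    rcases this with ⟨_, h⟩ | ⟨_, _, h⟩
    · exfalso
      have h3 : f (Cyc.mk 0 (i + 1)) = f (Cyc.mk 0 i) := by rw [ht, ht, h]
      have h4 := (Cyc.mk_inj.1 (f.injective h3)).2
      simp at h4
    · exact h
  have hN : ∀ m : ℕ, t 0 (m : ZMod n) = t 0 0 + m := by
    intro m
    induction m with
    | zero => simp
    | succ m ih => push_cast; rw [hs, ih, add_assoc]
  have hall : ∀ i, t 0 i = t 0 0 + i := fun i => by
    have : NeZero n := ⟨by omega⟩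
    obtain ⟨m, rfl⟩ := ZMod.natCast_zmod_surjective (n := n) i
    exact hN m
  refine ⟨t 0 0, ?_⟩
  ext x
  obtain ⟨k, i, rfl⟩ := x.exists_mk
  rw [Cyc.shift_mk, ht, ← hall]
  congr 1
  fin_cases k
  · rfl
  · exact h01 i
  · exact h12 i

/-- Working predicate for the induction. -/
def Good (G : Type*) [Group G] : Prop :=
  ∃ (P : Type) (_ : PartialOrder P) (_ : Fintype P),
    Fintype.card P ≤ 3 * Nat.card G ∧ (Nat.card G = 1 → Fintype.card P = 0) ∧
      Nonempty ((P ≃o P) ≃* G)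

theorem Good.congr {G H : Type*} [Group G] [Group H] (e : G ≃* H) (h : Good G) : Good H := by
  obtain ⟨P, i1, i2, h1, h2, ⟨f⟩⟩ := h
  rw [Nat.card_congr e.toEquiv] at h1 h2
  exact ⟨P, i1, i2, h1, h2, ⟨f.trans e⟩⟩

theorem good_zmod (n : ℕ) (hn : 1 < n) : Good (Multiplicative (ZMod n)) := by
  have : NeZero n := ⟨by omega⟩
  let φ : Multiplicative (ZMod n) →* (Cyc n ≃o Cyc n) :=
    { toFun := fun a => Cyc.shift a.toAdd
      map_one' := by
        ext x
        obtain ⟨k, i, rfl⟩ := x.exists_mk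
        change Cyc.mk k (0 + i) = Cyc.mk k i
        rw [zero_add]
      map_mul' := by
        intro a b
        ext x
        obtain ⟨k, i, rfl⟩ := x.exists_mk
        change Cyc.mk k (a.toAdd + b.toAdd + i) = Cyc.mk k (a.toAdd + (b.toAdd + i))
        rw [add_assoc] }
  have hφ : Function.Bijective φ := by
    constructor
    · intro a b h
      have h' : Cyc.shift a.toAdd (Cyc.mk 0 0) = Cyc.shift b.toAdd (Cyc.mk 0 0) :=
        congrArg (fun f : Cyc n ≃o Cyc n => f (Cyc.mk 0 0)) h
      rw [Cyc.shift_mk, Cyc.shift_mk, Cyc.mk_inj] at h'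
      simpa using h'.2
    · intro f
      obtain ⟨a, rfl⟩ := Cyc.eq_shift hn f
      exact ⟨Multiplicative.ofAdd a, rfl⟩
  have hc : Nat.card (Multiplicative (ZMod n)) = n := by
    rw [Nat.card_congr Multiplicative.toAdd, Nat.card_zmod]
  refine ⟨Cyc n, inferInstance, inferInstanceAs (Fintype (Fin 3 × ZMod n)), ?_, ?_,
    ⟨(MulEquiv.ofBijective φ hφ).symm⟩⟩
  · rw [hc]
    change Fintype.card (Fin 3 × ZMod n) ≤ _
    simp [ZMod.card]
  · omega

section Sum
variable {P Q : Type} [PartialOrder P] [PartialOrder Q] [Finite P] [Finite Q]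

theorem sum_left (f : (P ⊕ₗ Q) ≃o (P ⊕ₗ Q)) (p : P) :
    ∃ p' : P, f (toLex (Sum.inl p)) = toLex (Sum.inl p') := by
  rcases h : ofLex (f (toLex (Sum.inl p))) with p' | q
  · exact ⟨p', by rw [← h]; rfl⟩
  exfalso
  have hf : f (toLex (Sum.inl p)) = toLex (Sum.inr q) := by rw [← h]; rfl
  -- every `f (inr y)` is in the right summand
  have hr : ∀ y : Q, ∃ z : Q, f (toLex (Sum.inr y)) = toLex (Sum.inr z) := by
    intro y
    rcases h' : ofLex (f (toLex (Sum.inr y))) with z | z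
    · exfalso
      have hz : f (toLex (Sum.inr y)) = toLex (Sum.inl z) := by rw [← h']; rfl
      have h1 : f (toLex (Sum.inl p)) < f (toLex (Sum.inr y)) :=
        f.strictMono (Sum.Lex.inl_lt_inr p y)
      rw [hf, hz] at h1
      exact lt_asymm h1 (Sum.Lex.inl_lt_inr z q)
    · exact ⟨z, by rw [← h']; rfl⟩
  choose g hg using hr
  have ginj : Function.Injective g := by
    intro a b hab
    have : f (toLex (Sum.inr a)) = f (toLex (Sum.inr b)) := by rw [hg, hg, hab]
    simpa using f.injective this
  obtain ⟨y, rfl⟩ := (Finite.injective_iff_surjective.1 ginj) q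
  rw [← hg] at hf
  have := f.injective hf
  simp at this

theorem sum_right (f : (P ⊕ₗ Q) ≃o (P ⊕ₗ Q)) (q : Q) :
    ∃ q' : Q, f (toLex (Sum.inr q)) = toLex (Sum.inr q') := by
  rcases h : ofLex (f (toLex (Sum.inr q))) with p | q'
  · exfalso
    have hf : f (toLex (Sum.inr q)) = toLex (Sum.inl p) := by rw [← h]; rfl
    obtain ⟨p', hp'⟩ := sum_left f.symm p
    rw [← hf, OrderIso.symm_apply_apply] at hp'
    simp at hp'
  · exact ⟨q', by rw [← h]; rfl⟩

def sumHom : (P ≃o P) × (Q ≃o Q) →* ((P ⊕ₗ Q) ≃o (P ⊕ₗ Q)) where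
  toFun x := OrderIso.sumLexCongr x.1 x.2
  map_one' := by
    ext x
    rcases x with x | x <;> rfl
  map_mul' a b := by
    ext x
    rcases x with x | x <;> rfl

theorem sumHom_inl (a : (P ≃o P) × (Q ≃o Q)) (p : P) :
    sumHom a (toLex (Sum.inl p)) = toLex (Sum.inl (a.1 p)) := rfl

theorem sumHom_inr (a : (P ≃o P) × (Q ≃o Q)) (p : Q) :
    sumHom a (toLex (Sum.inr p)) = toLex (Sum.inr (a.2 p)) := rfl

theorem sumHom_bijective : Function.Bijective (sumHom (P := P) (Q := Q)) := by
  constructor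
  · intro a b h
    refine Prod.ext ?_ ?_
    · ext p
      have := congrArg (fun f : (P ⊕ₗ Q) ≃o (P ⊕ₗ Q) => f (toLex (Sum.inl p))) h
      simpa [sumHom_inl] using this
    · ext p
      have := congrArg (fun f : (P ⊕ₗ Q) ≃o (P ⊕ₗ Q) => f (toLex (Sum.inr p))) h
      simpa [sumHom_inr] using this
  · intro f
    choose l hl using sum_left f
    choose l' hl' using sum_left f.symm
    choose r hr using sum_right f
    choose r' hr' using sum_right f.symm
    let L : P ≃o P :=
      { toFun := l
        invFun := l'
        left_inv := fun p => by
          have := hl' (l p)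
          rw [← hl, OrderIso.symm_apply_apply] at this
          simpa using this.symm
        right_inv := fun p => by
          have := hl (l' p)
          rw [← hl', OrderIso.apply_symm_apply] at this
          simpa using this.symm
        map_rel_iff' := by
          intro a b
          have := f.le_iff_le (x := toLex (Sum.inl a)) (y := toLex (Sum.inl b))
          rw [hl, hl] at this
          simpa using this }
    let R : Q ≃o Q :=
      { toFun := r
        invFun := r'
        left_inv := fun p => by
          have := hr' (r p)
          rw [← hr, OrderIso.symm_apply_apply] at this
          simpa using this.symm
        right_inv := fun p => by
          have := hr (r' p)
          rw [← hr', OrderIso.apply_symm_apply] at this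
          simpa using this.symm
        map_rel_iff' := by
          intro a b
          have := f.le_iff_le (x := toLex (Sum.inr a)) (y := toLex (Sum.inr b))
          rw [hr, hr] at this
          simpa using this }
    refine ⟨(L, R), ?_⟩
    ext x
    rcases x with x | x
    · exact (hl x).symm
    · exact (hr x).symm

noncomputable def sumEquiv : (P ≃o P) × (Q ≃o Q) ≃* ((P ⊕ₗ Q) ≃o (P ⊕ₗ Q)) :=
  MulEquiv.ofBijective sumHom sumHom_bijective

end Sum

theorem card_sumLex (P Q : Type) [Fintype P] [Fintype Q] (i : Fintype (P ⊕ₗ Q)) :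
    @Fintype.card (P ⊕ₗ Q) i = Fintype.card P + Fintype.card Q := by
  rw [← Fintype.card_sum]
  exact Fintype.card_congr ofLex

theorem Good.prod {G H : Type*} [Group G] [Group H] [Finite G] [Finite H]
    (hG : Good G) (hH : Good H) : Good (G × H) := by
  obtain ⟨P, i1, i2, h1, h2, ⟨f⟩⟩ := hG
  obtain ⟨Q, j1, j2, k1, k2, ⟨g⟩⟩ := hH
  refine ⟨P ⊕ₗ Q, inferInstance, Fintype.ofEquiv (P ⊕ Q) toLex, ?_, ?_,
    ⟨sumEquiv.symm.trans (f.prodCongr g)⟩⟩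
  · rw [card_sumLex, Nat.card_prod]
    have hg : 0 < Nat.card G := Nat.card_pos
    have hh : 0 < Nat.card H := Nat.card_pos
    by_cases a : Nat.card G = 1
    · rw [h2 a, a]; omega
    by_cases b : Nat.card H = 1
    · rw [k2 b, b]; omega
    have a' : 2 ≤ Nat.card G := by omega
    have b' : 2 ≤ Nat.card H := by omega
    nlinarith
  · rw [card_sumLex, Nat.card_prod]
    intro h
    rw [h2 (Nat.eq_one_of_mul_eq_one_right h), k2 (Nat.eq_one_of_mul_eq_one_left h)]

theorem good_pi (ι : Type*) [Fintype ι] :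
    ∀ n : ι → ℕ, (∀ i, 1 < n i) → Good ((i : ι) → Multiplicative (ZMod (n i))) := by
  refine Fintype.induction_empty_option (P := fun α _ => ∀ n : α → ℕ, (∀ i, 1 < n i) →
    Good ((i : α) → Multiplicative (ZMod (n i)))) ?_ ?_ ?_ ι
  · intro α β _ e ih n hn
    have := ih (fun i => n (e i)) (fun i => hn _)
    refine this.congr ?_
    exact { Equiv.piCongrLeft (fun i => Multiplicative (ZMod (n i))) e with
      map_mul' := by
        intro x y
        funext b
        obtain ⟨a, rfl⟩ := e.surjective b
        simp [Equiv.piCongrLeft_apply_apply] }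
  · intro n hn
    refine ⟨Empty, inferInstance, inferInstance, by simp, by simp, ?_⟩
    have : Unique (Empty ≃o Empty) := ⟨⟨1⟩, fun f => by ext x; exact x.elim⟩
    exact ⟨MulEquiv.ofUnique⟩
  · intro α _ ih n hn
    have hne : ∀ i, NeZero (n i) := fun i => ⟨by have := hn i; omega⟩
    have : ∀ i, Finite (Multiplicative (ZMod (n i))) := fun i =>
      inferInstanceAs (Finite (ZMod (n i)))
    have h := (good_zmod (n none) (hn none)).prod (ih (fun i => n (some i)) (fun i => hn _))
    refine h.congr (MulEquiv.symm ?_)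
    exact { Equiv.piOptionEquivProd (β := fun i => Multiplicative (ZMod (n i))) with
      map_mul' := fun x y => rfl }

end PosetAut

open PosetAut in
/-- For every finite abelian group `G` there exists a finite partially ordered set `P`
with exactly `3 * |G|` elements whose automorphism group is isomorphic to `G`. -/
theorem exists_poset_card_three_mul_aut_iso_of_comm (G : Type*) [CommGroup G] [Fintype G] :
    ∃ (P : Type) (_ : PartialOrder P) (_ : Fintype P),
      Fintype.card P = 3 * Fintype.card G ∧ Nonempty ((P ≃o P) ≃* G) := by
  obtain ⟨ι, _, n, hn, ⟨e⟩⟩ := CommGroup.equiv_prod_multiplicative_zmod_of_finite G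
  obtain ⟨P, i1, i2, h1, -, ⟨f⟩⟩ := (good_pi ι n hn).congr e.symm
  rw [Nat.card_eq_fintype_card] at h1
  let k := 3 * Fintype.card G - Fintype.card P
  refine ⟨P ⊕ₗ Fin k, inferInstance, Fintype.ofEquiv (P ⊕ Fin k) toLex, ?_, ?_⟩
  · rw [card_sumLex, Fintype.card_fin]
    omega
  · have : Unique (Fin k ≃o Fin k) := ⟨⟨1⟩, fun f => Subsingleton.elim _ _⟩
    exact ⟨sumEquiv.symm.trans (MulEquiv.prodUnique.trans f)⟩
end
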